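/- Let k ≥ 3 and 1 ≤ j ≤ k−1 be integers, let s ≥ 0 be a fixed integer, and suppose p = (j·log n + s·log log n + c_n)/C(n,k−j) where c_n = o(log n) and c_n → −∞. Let D_s be the number of j-sets of degree exactly s in H^k(n,p). Then D_s → ∞ with high probability, i.e. for every constant K, Pr(D_s > K) → 1 as n → ∞. -/

import Mathlib

open Filter Asymptotics

open scoped Classical

noncomputable section

/-- The collection of all `k`-element subsets of the vertex set `Fin n`,
    i.e. all potential edges of a `k`-uniform hypergraph on `n` vertices. -/
def kSets (n k : ℕ) : Finset (Finset (Fin n)) :=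
  Finset.powersetCard k (Finset.univ : Finset (Fin n))

/-- The probability that the binomial random `k`-uniform hypergraph `H^k(n,p)`
    (each `k`-set an edge independently with probability `p`) has property `Q`. -/
def binomProb (n k : ℕ) (p : ℝ) (Q : Finset (Finset (Fin n)) → Prop) : ℝ :=
  ∑ H ∈ (kSets n k).powerset,
    (if Q H then p ^ H.card * (1 - p) ^ ((kSets n k).card - H.card) else 0)

/-- The expectation of a real-valued random variable `X` of `H^k(n,p)`. -/
def binomExp (n k : ℕ) (p : ℝ) (X : Finset (Finset (Fin n)) → ℝ) : ℝ :=
  ∑ H ∈ (kSets n k).powerset,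
    p ^ H.card * (1 - p) ^ ((kSets n k).card - H.card) * X H

/-- The degree of a vertex set `J` in the hypergraph with edge set `H`:
    the number of edges containing `J`. -/
def setDegree {n : ℕ} (H : Finset (Finset (Fin n))) (J : Finset (Fin n)) : ℕ :=
  (H.filter (fun e => J ⊆ e)).card

/-- `J` is isolated in `H`: it is contained in no edge. -/
def IsIsolatedSet {n : ℕ} (H : Finset (Finset (Fin n))) (J : Finset (Fin n)) : Prop :=
  ∀ e ∈ H, ¬ J ⊆ e

/-- Two sets `J1`, `J2` are `j`-connected in the hypergraph with edge set `H`: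
    there is a walk of edges from one to the other in which consecutive edges
    intersect in at least `j` vertices. -/
def JConn {n : ℕ} (j : ℕ) (H : Finset (Finset (Fin n))) (J1 J2 : Finset (Fin n)) : Prop :=
  ∃ e1 ∈ H, ∃ e2 ∈ H, J1 ⊆ e1 ∧ J2 ⊆ e2 ∧
    Relation.ReflTransGen (fun e f => e ∈ H ∧ f ∈ H ∧ j ≤ (e ∩ f).card) e1 e2

/-- The hypergraph with edge set `H` is `j`-connected:
    all `j`-sets lie in a single `j`-component, i.e. are pairwise `j`-connected. -/
def JConnectedHG (n j : ℕ) (H : Finset (Finset (Fin n))) : Prop :=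
  ∀ J1 J2 : Finset (Fin n), J1.card = j → J2.card = j → JConn j H J1 J2

/-- `C` is a `j`-component of `H`: a maximal nonempty set of pairwise `j`-connected `j`-sets. -/
def IsJComponent (n j : ℕ) (H : Finset (Finset (Fin n))) (C : Finset (Finset (Fin n))) : Prop :=
  C.Nonempty ∧ (∀ J ∈ C, J.card = j) ∧ (∀ J1 ∈ C, ∀ J2 ∈ C, JConn j H J1 J2) ∧
    ∀ J : Finset (Fin n), J.card = j → (∃ J' ∈ C, JConn j H J J') → J ∈ C

/-- `D_s`: the number of `j`-sets of degree exactly `s`. -/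
def numDegSets (n j s : ℕ) (H : Finset (Finset (Fin n))) : ℕ :=
  ((Finset.powersetCard j (Finset.univ : Finset (Fin n))).filter
    (fun J => setDegree H J = s)).card

/-- The Poisson probability mass function with mean `lam`. -/
def poissonPMF (lam : ℝ) (i : ℕ) : ℝ := Real.exp (-lam) * lam ^ i / (Nat.factorial i)

/-- Total variation distance between the distribution of `D_s` in `H^k(n,p)`
    and the Poisson distribution with mean `lam`. -/
def dTVpoisson (n k j s : ℕ) (p lam : ℝ) : ℝ :=
  (1 / 2) * ∑' i : ℕ, |binomProb n k p (fun H => numDegSets n j s H = i) - poissonPMF lam i|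

/-- The probability that the uniform random hypergraph `H^k(n,M)` (chosen uniformly among
    all `k`-uniform hypergraphs on `Fin n` with exactly `M` edges) has property `Q`. -/
def uniformProb (n k M : ℕ) (Q : Finset (Finset (Fin n)) → Prop) : ℝ :=
  (((Finset.powersetCard M (kSets n k)).filter Q).card : ℝ) /
    ((Finset.powersetCard M (kSets n k)).card : ℝ)

/-! The proof is the second moment method. Conditionally on the edges containing a `j`-set `J₁`, the
degree of another `j`-set `J₂` equals `s` only if the edges that contain `J₂` but not `J₁` number
exactly some `t ≤ s`. Only a vanishing proportion of the edges containing `J₂` contain `J₁` too, and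
binomial probabilities increase up to the mean, so this has probability at most `1 + o(1)` times
`Pr(deg J₂ = s)`. Hence `E[D_s²] ≤ E[D_s] + (1 + o(1)) E[D_s]²`, and the Paley–Zygmund inequality
gives `Pr(D_s > K) → 1` as soon as `E[D_s] → ∞`.

With `λ = p * C(n, k - j)`, the approximate average degree of a `j`-set, `E[D_s]` has order
`n ^ j * λ ^ s * exp (-λ)`. For `λ = j log n + s log log n + c_n` that is
`(λ / log n) ^ s * exp (-c_n)`, which diverges. -/

section RandomSubset

variable {α : Type*} {A B E : Finset α} {p : ℝ}

/-- The probability that a `p`-random subset of `E`, which contains each element of `E`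
independently with probability `p`, equals `H`; only meaningful for `H ⊆ E`. -/
def subsetWeight (E : Finset α) (p : ℝ) (H : Finset α) : ℝ :=
  p ^ H.card * (1 - p) ^ (E.card - H.card)

/-- The expectation of `X` over a `p`-random subset of `E`. Events enter through their indicator
functions, and `binomExp n k` is by definition the case `E = kSets n k`. -/
def subsetExp (E : Finset α) (p : ℝ) (X : Finset α → ℝ) : ℝ :=
  ∑ H ∈ E.powerset, subsetWeight E p H * X H

/-- The probability that a binomial random variable with `m` trials and success probability `p`
takes the value `t`. -/
def binomMass (m : ℕ) (p : ℝ) (t : ℕ) : ℝ :=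
  m.choose t * p ^ t * (1 - p) ^ (m - t)

lemma subsetWeight_nonneg (hp0 : 0 ≤ p) (hp1 : p ≤ 1) (H : Finset α) : 0 ≤ subsetWeight E p H :=
  mul_nonneg (pow_nonneg hp0 _) (pow_nonneg (sub_nonneg.2 hp1) _)

lemma subsetExp_const (E : Finset α) (p a : ℝ) : subsetExp E p (fun _ => a) = a := by
  simp [subsetExp, subsetWeight, ← Finset.sum_mul, Finset.sum_pow_mul_eq_add_pow]

lemma subsetExp_const_mul (a : ℝ) (X : Finset α → ℝ) :
    subsetExp E p (fun H => a * X H) = a * subsetExp E p X := by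
  simp only [subsetExp, Finset.mul_sum, mul_left_comm]

lemma subsetExp_add (X Y : Finset α → ℝ) :
    subsetExp E p (fun H => X H + Y H) = subsetExp E p X + subsetExp E p Y := by
  simp only [subsetExp, mul_add, Finset.sum_add_distrib]

lemma subsetExp_sum {ι : Type*} (I : Finset ι) (X : ι → Finset α → ℝ) :
    subsetExp E p (fun H => ∑ i ∈ I, X i H) = ∑ i ∈ I, subsetExp E p (X i) := by
  simp only [subsetExp, Finset.mul_sum]
  exact Finset.sum_comm

lemma subsetExp_congr {X Y : Finset α → ℝ} (h : ∀ H ⊆ E, X H = Y H) :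
    subsetExp E p X = subsetExp E p Y :=
  Finset.sum_congr rfl fun H hH => by rw [h H (Finset.mem_powerset.1 hH)]

lemma subsetExp_mono (hp0 : 0 ≤ p) (hp1 : p ≤ 1) {X Y : Finset α → ℝ}
    (h : ∀ H ⊆ E, X H ≤ Y H) : subsetExp E p X ≤ subsetExp E p Y :=
  Finset.sum_le_sum fun H hH =>
    mul_le_mul_of_nonneg_left (h H (Finset.mem_powerset.1 hH)) (subsetWeight_nonneg hp0 hp1 H)

lemma sum_powerset_union {β : Type*} [AddCommMonoid β] (hAB : Disjoint A B)
    (f : Finset α → β) :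
    ∑ H ∈ (A ∪ B).powerset, f H = ∑ S ∈ A.powerset, ∑ T ∈ B.powerset, f (S ∪ T) := by
  rw [← Finset.sum_product']
  refine Finset.sum_nbij' (fun H => (H ∩ A, H ∩ B)) (fun x => x.1 ∪ x.2)
    (fun H _ => by simp) ?_ ?_ ?_ ?_
  · rintro ⟨S, T⟩ h
    simp only [Finset.mem_product, Finset.mem_powerset] at h ⊢
    exact Finset.union_subset_union h.1 h.2
  · intro H hH
    rw [← Finset.inter_union_distrib_left, Finset.inter_eq_left.2 (Finset.mem_powerset.1 hH)]
  · rintro ⟨S, T⟩ h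
    simp only [Finset.mem_product, Finset.mem_powerset] at h
    have hSB : S ∩ B = ∅ := Finset.disjoint_iff_inter_eq_empty.1 (hAB.mono_left h.1)
    have hTA : T ∩ A = ∅ := Finset.disjoint_iff_inter_eq_empty.1 (hAB.symm.mono_left h.2)
    simp [Finset.union_inter_distrib_right, hSB, hTA, Finset.inter_eq_left.2 h.1,
      Finset.inter_eq_left.2 h.2]
  · intro H hH
    rw [← Finset.inter_union_distrib_left, Finset.inter_eq_left.2 (Finset.mem_powerset.1 hH)]

lemma subsetWeight_union (hAB : Disjoint A B) {S T : Finset α} (hS : S ⊆ A) (hT : T ⊆ B) :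
    subsetWeight (A ∪ B) p (S ∪ T) = subsetWeight A p S * subsetWeight B p T := by
  have hSA := Finset.card_le_card hS
  have hTB := Finset.card_le_card hT
  rw [subsetWeight, subsetWeight, subsetWeight, Finset.card_union_of_disjoint hAB,
    Finset.card_union_of_disjoint (hAB.mono hS hT),
    show A.card + B.card - (S.card + T.card) = (A.card - S.card) + (B.card - T.card) by omega]
  ring

lemma subsetExp_union (hAB : Disjoint A B) (X : Finset α → ℝ) :
    subsetExp (A ∪ B) p X = subsetExp A p fun S => subsetExp B p fun T => X (S ∪ T) := by
  simp only [subsetExp, sum_powerset_union hAB, Finset.mul_sum]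
  refine Finset.sum_congr rfl fun S hS => Finset.sum_congr rfl fun T hT => ?_
  rw [subsetWeight_union hAB (Finset.mem_powerset.1 hS) (Finset.mem_powerset.1 hT), mul_assoc]

lemma subsetExp_filter (q : α → Prop) [DecidablePred q] (X : Finset α → ℝ) :
    subsetExp E p X = subsetExp (E.filter q) p fun S =>
      subsetExp (E.filter fun e => ¬ q e) p fun T => X (S ∪ T) := by
  rw [← subsetExp_union (Finset.disjoint_filter_filter_not E E q),
    Finset.filter_union_filter_not_eq]

lemma filter_union_eq_left {q : α → Prop} [DecidablePred q] {S T : Finset α}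
    (hS : S ⊆ E.filter q) (hT : T ⊆ E.filter fun e => ¬ q e) : (S ∪ T).filter q = S := by
  rw [Finset.filter_union, Finset.filter_true_of_mem fun e he => (Finset.mem_filter.1 (hS he)).2,
    Finset.filter_false_of_mem fun e he => (Finset.mem_filter.1 (hT he)).2, Finset.union_empty]

lemma subsetExp_card_eq (E : Finset α) (p : ℝ) (t : ℕ) :
    subsetExp E p (fun H => if H.card = t then 1 else 0) = binomMass E.card p t := by
  have hweight : ∀ H ∈ E.powersetCard t, subsetWeight E p H = p ^ t * (1 - p) ^ (E.card - t) :=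
    fun H hH => by rw [subsetWeight, (Finset.mem_powersetCard.1 hH).2]
  simp only [subsetExp, mul_ite, mul_one, mul_zero]
  rw [← Finset.sum_filter, ← Finset.powersetCard_eq_filter, Finset.sum_congr rfl hweight,
    Finset.sum_const, Finset.card_powersetCard, nsmul_eq_mul, binomMass, mul_assoc]

lemma subsetExp_card_filter_eq (E : Finset α) (p : ℝ) (q : α → Prop) [DecidablePred q] (t : ℕ) :
    subsetExp E p (fun H => if (H.filter q).card = t then 1 else 0) =
      binomMass (E.filter q).card p t := by
  rw [subsetExp_filter q, ← subsetExp_card_eq]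
  refine subsetExp_congr fun S hS => ?_
  rw [subsetExp_congr fun T hT => by rw [filter_union_eq_left hS hT], subsetExp_const]

/- Conditionally on the elements satisfying `q₁`, the event for `q₂` asks that the independent
elements satisfying `¬ q₁ ∧ q₂` number exactly `t` for some `t ≤ s`. -/
lemma subsetExp_card_filter_eq_and_le (hp0 : 0 ≤ p) (hp1 : p ≤ 1) (q₁ q₂ : α → Prop)
    [DecidablePred q₁] [DecidablePred q₂] {s : ℕ} {b : ℝ} (hb0 : 0 ≤ b)
    (hb : ∀ t ≤ s, binomMass (E.filter fun e => ¬ q₁ e ∧ q₂ e).card p t ≤ b) :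
    subsetExp E p (fun H => (if (H.filter q₁).card = s then 1 else 0) *
      (if (H.filter q₂).card = s then 1 else 0)) ≤ b * binomMass (E.filter q₁).card p s := by
  have hcond (S : Finset α) (hS : S ⊆ E.filter q₁) :
      subsetExp (E.filter fun e => ¬ q₁ e) p
        (fun T => if ((S ∪ T).filter q₂).card = s then 1 else 0) ≤ b := by
    have hcard (T : Finset α) (hT : T ⊆ E.filter fun e => ¬ q₁ e) :
        ((S ∪ T).filter q₂).card = (S.filter q₂).card + (T.filter q₂).card := by
      rw [Finset.filter_union, Finset.card_union_of_disjoint]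
      exact ((Finset.disjoint_filter_filter_not E E q₁).mono hS hT).mono
        (Finset.filter_subset _ _) (Finset.filter_subset _ _)
    rw [subsetExp_congr fun T hT => by rw [hcard T hT]]
    by_cases hs : (S.filter q₂).card ≤ s
    · have hsub (a : ℕ) : (S.filter q₂).card + a = s ↔ a = s - (S.filter q₂).card := by omega
      simp only [hsub]
      rw [subsetExp_card_filter_eq, Finset.filter_filter]
      exact hb _ (Nat.sub_le _ _)
    · rw [subsetExp_congr fun T _ => if_neg (by omega), subsetExp_const]
      exact hb0
  rw [subsetExp_filter q₁, ← subsetExp_card_eq, ← subsetExp_const_mul]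
  refine subsetExp_mono hp0 hp1 fun S hS => ?_
  rw [subsetExp_congr fun T hT => by rw [filter_union_eq_left hS hT], subsetExp_const_mul, mul_comm]
  exact mul_le_mul_of_nonneg_right (hcond S hS) (by positivity)

theorem subsetExp_paley_zygmund (hp0 : 0 ≤ p) (hp1 : p ≤ 1) (X : Finset α → ℝ) {K : ℝ}
    (hK : 0 ≤ K) (hKX : K ≤ subsetExp E p X) :
    (subsetExp E p X - K) ^ 2 ≤
      subsetExp E p (fun H => X H ^ 2) * subsetExp E p (fun H => if K < X H then 1 else 0) := by
  have hw := subsetWeight_nonneg (E := E) hp0 hp1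
  have htruncate : subsetExp E p X - K ≤ subsetExp E p (fun H => if K < X H then X H else 0) := by
    rw [sub_le_iff_le_add]
    calc subsetExp E p X
        ≤ subsetExp E p (fun H => (if K < X H then X H else 0) + K) :=
          subsetExp_mono hp0 hp1 fun H _ => by split_ifs <;> linarith
      _ = _ := by rw [subsetExp_add, subsetExp_const]
  calc (subsetExp E p X - K) ^ 2
      ≤ subsetExp E p (fun H => if K < X H then X H else 0) ^ 2 :=
        pow_le_pow_left₀ (sub_nonneg.2 hKX) htruncate 2
    _ ≤ _ := by
        refine Finset.sum_sq_le_sum_mul_sum_of_sq_le_mul _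
          (fun H _ => mul_nonneg (hw H) (sq_nonneg _))
          (fun H _ => mul_nonneg (hw H) (by positivity)) fun H _ => ?_
        beta_reduce
        split_ifs <;> linarith

end RandomSubset

section BinomMass

variable {N s t : ℕ} {p : ℝ}

lemma binomMass_nonneg (hp0 : 0 ≤ p) (hp1 : p ≤ 1) : 0 ≤ binomMass N p t :=
  mul_nonneg (mul_nonneg (Nat.cast_nonneg _) (pow_nonneg hp0 _)) (pow_nonneg (sub_nonneg.2 hp1) _)

lemma choose_mul_pow_le_succ (hp : 0 ≤ p) (ht : (t + 1 : ℝ) ≤ (N - t) * p) :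
    N.choose t * p ^ t ≤ N.choose (t + 1) * p ^ (t + 1) := by
  have htN : t ≤ N := by
    by_contra! h
    have : (N : ℝ) - t ≤ 0 := by simpa using h.le
    nlinarith
  have hchoose : (N.choose (t + 1) : ℝ) * (t + 1) = N.choose t * (N - t) := by
    rw [← Nat.cast_sub htN]
    exact_mod_cast Nat.choose_succ_right_eq N t
  refine le_of_mul_le_mul_right ?_ (Nat.cast_add_one_pos (α := ℝ) t)
  calc N.choose t * p ^ t * (t + 1)
      ≤ N.choose t * p ^ t * ((N - t) * p) := by gcongr
    _ = N.choose t * (N - t) * p ^ (t + 1) := by ring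
    _ = N.choose (t + 1) * p ^ (t + 1) * (t + 1) := by rw [← hchoose]; ring

lemma choose_mul_pow_le_of_le (hp : 0 ≤ p) (hs : (s : ℝ) ≤ (N - s) * p) (hts : t ≤ s) :
    N.choose t * p ^ t ≤ N.choose s * p ^ s := by
  induction s, hts using Nat.le_induction with
  | base => rfl
  | succ s _ ih =>
    push_cast at hs
    exact (ih (by linarith)).trans (choose_mul_pow_le_succ hp (by linarith))

lemma binomMass_le_div (hp0 : 0 ≤ p) (hp1 : p < 1) (hs : (s : ℝ) ≤ (N - s) * p) (hts : t ≤ s)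
    {m M : ℕ} (hmN : m ≤ N) (hNm : N ≤ m + M) :
    binomMass m p t ≤ binomMass N p s / (1 - p) ^ M := by
  have hq : 0 < 1 - p := sub_pos.2 hp1
  rw [le_div_iff₀ (pow_pos hq M), binomMass, binomMass, mul_assoc, ← pow_add]
  have hchoose : m.choose t * p ^ t ≤ N.choose s * p ^ s :=
    (mul_le_mul_of_nonneg_right (mod_cast Nat.choose_le_choose t hmN) (pow_nonneg hp0 t)).trans
      (choose_mul_pow_le_of_le hp0 hs hts)
  have hpow : (1 - p) ^ (m - t + M) ≤ (1 - p) ^ (N - s) :=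
    pow_le_pow_of_le_one hq.le (sub_le_self 1 hp0) (by omega)
  gcongr

end BinomMass

section DegreeSets

variable {n k j s : ℕ} {p : ℝ} {J J₁ J₂ : Finset (Fin n)}

lemma card_kSets_filter_subset (hJ : J.card ≤ k) :
    ((kSets n k).filter fun e => J ⊆ e).card = (n - J.card).choose (k - J.card) := by
  simpa [kSets] using Finset.card_filter_powersetCard_subset J Finset.univ k J.subset_univ hJ

/- An edge containing both `J₁` and `J₂` contains `insert x J₂` for any `x ∈ J₁ \ J₂`. -/
lemma choose_le_card_kSets_filter_add (h₁ : ¬ J₁ ⊆ J₂) (h₂ : J₂.card < k) :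
    (n - J₂.card).choose (k - J₂.card) ≤
      ((kSets n k).filter fun e => ¬ J₁ ⊆ e ∧ J₂ ⊆ e).card +
        (n - (J₂.card + 1)).choose (k - (J₂.card + 1)) := by
  obtain ⟨x, hx₁, hx₂⟩ := Finset.not_subset.1 h₁
  have hcard : (insert x J₂).card = J₂.card + 1 := Finset.card_insert_of_notMem hx₂
  rw [← hcard, ← card_kSets_filter_subset (hcard.trans_le h₂), ← card_kSets_filter_subset h₂.le]
  refine (Finset.card_le_card fun e he => ?_).trans (Finset.card_union_le _ _)
  rw [Finset.mem_filter] at he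
  rw [Finset.mem_union, Finset.mem_filter, Finset.mem_filter]
  by_cases h : J₁ ⊆ e
  · exact .inr ⟨he.1, Finset.insert_subset (h hx₁) he.2⟩
  · exact .inl ⟨he.1, h, he.2⟩

lemma numDegSets_eq_sum (n j s : ℕ) (H : Finset (Finset (Fin n))) :
    (numDegSets n j s H : ℝ) =
      ∑ J ∈ Finset.powersetCard j Finset.univ, if setDegree H J = s then 1 else 0 := by
  rw [numDegSets, Finset.card_filter]
  push_cast
  rfl

lemma binomExp_eq_subsetExp (n k : ℕ) (p : ℝ) (X : Finset (Finset (Fin n)) → ℝ) :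
    binomExp n k p X = subsetExp (kSets n k) p X :=
  rfl

lemma binomProb_eq_binomExp (n k : ℕ) (p : ℝ) (Q : Finset (Finset (Fin n)) → Prop) :
    binomProb n k p Q = binomExp n k p fun H => if Q H then 1 else 0 := by
  simp only [binomProb, binomExp, mul_ite, mul_one, mul_zero]

lemma binomProb_nonneg (hp0 : 0 ≤ p) (hp1 : p ≤ 1) (Q : Finset (Finset (Fin n)) → Prop) :
    0 ≤ binomProb n k p Q := by
  rw [binomProb_eq_binomExp, binomExp_eq_subsetExp]
  exact (subsetExp_const _ p 0).symm.trans_le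
    (subsetExp_mono hp0 hp1 fun H _ => by split_ifs <;> norm_num)

lemma binomProb_le_one (hp0 : 0 ≤ p) (hp1 : p ≤ 1) (Q : Finset (Finset (Fin n)) → Prop) :
    binomProb n k p Q ≤ 1 := by
  rw [binomProb_eq_binomExp, binomExp_eq_subsetExp]
  exact (subsetExp_mono hp0 hp1 fun H _ => by split_ifs <;> norm_num).trans_eq
    (subsetExp_const _ p 1)

lemma subsetExp_setDegree_eq (hJ : J.card ≤ k) :
    subsetExp (kSets n k) p (fun H => if setDegree H J = s then 1 else 0) =
      binomMass ((n - J.card).choose (k - J.card)) p s :=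
  (subsetExp_card_filter_eq _ p (fun e => J ⊆ e) s).trans (by rw [card_kSets_filter_subset hJ])

lemma subsetExp_setDegree_eq_and_le (hp0 : 0 ≤ p) (hp1 : p < 1) (hjk : j < k)
    (hs : (s : ℝ) ≤ ((n - j).choose (k - j) - s) * p)
    (h₁ : J₁.card = j) (h₂ : J₂.card = j) (hne : J₁ ≠ J₂) :
    subsetExp (kSets n k) p (fun H => (if setDegree H J₁ = s then 1 else 0) *
        (if setDegree H J₂ = s then 1 else 0)) ≤
      binomMass ((n - j).choose (k - j)) p s ^ 2 /
        (1 - p) ^ (n - (j + 1)).choose (k - (j + 1)) := by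
  have hnot : ¬ J₁ ⊆ J₂ := fun h => hne (Finset.eq_of_subset_of_card_le h (h₂.trans h₁.symm).le)
  have hle : ((kSets n k).filter fun e => ¬ J₁ ⊆ e ∧ J₂ ⊆ e).card ≤ (n - j).choose (k - j) := by
    rw [← h₂, ← card_kSets_filter_subset (h₂.trans_le hjk.le)]
    exact Finset.card_le_card (Finset.monotone_filter_right _ fun e _ he => he.2)
  have hge := choose_le_card_kSets_filter_add hnot (h₂.trans_lt hjk)
  rw [h₂] at hge
  have hpair := subsetExp_card_filter_eq_and_le hp0 hp1.le (fun e => J₁ ⊆ e) (fun e => J₂ ⊆ e)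
    (div_nonneg (binomMass_nonneg hp0 hp1.le) (pow_nonneg (sub_nonneg.2 hp1.le) _))
    fun t ht => binomMass_le_div hp0 hp1 hs ht hle hge
  rw [card_kSets_filter_subset (h₁.trans_le hjk.le), h₁] at hpair
  exact hpair.trans_eq (by ring)

lemma binomExp_numDegSets (hjk : j ≤ k) :
    binomExp n k p (fun H => (numDegSets n j s H : ℝ)) =
      n.choose j * binomMass ((n - j).choose (k - j)) p s := by
  simp only [binomExp_eq_subsetExp, numDegSets_eq_sum]
  rw [subsetExp_sum, Finset.sum_congr rfl (g := fun _ => binomMass ((n - j).choose (k - j)) p s)]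
  · simp
  · intro J hJ
    obtain rfl := (Finset.mem_powersetCard.1 hJ).2
    exact subsetExp_setDegree_eq hjk

lemma binomExp_numDegSets_sq_le (hp0 : 0 ≤ p) (hp1 : p < 1) (hjk : j < k)
    (hs : (s : ℝ) ≤ ((n - j).choose (k - j) - s) * p) :
    binomExp n k p (fun H => (numDegSets n j s H : ℝ) ^ 2) ≤
      binomExp n k p (fun H => (numDegSets n j s H : ℝ)) +
        binomExp n k p (fun H => (numDegSets n j s H : ℝ)) ^ 2 /
          (1 - p) ^ (n - (j + 1)).choose (k - (j + 1)) := by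
  set P := Finset.powersetCard j (Finset.univ : Finset (Fin n)) with hP
  set b := binomMass ((n - j).choose (k - j)) p s
  set c := b ^ 2 / (1 - p) ^ (n - (j + 1)).choose (k - (j + 1))
  have hcard {J} (hJ : J ∈ P) : J.card = j := (Finset.mem_powersetCard.1 hJ).2
  have hc : 0 ≤ c := div_nonneg (sq_nonneg _) (pow_nonneg (sub_nonneg.2 hp1.le) _)
  have hpair : ∀ J₁ ∈ P, ∀ J₂ ∈ P,
      subsetExp (kSets n k) p (fun H => (if setDegree H J₁ = s then 1 else 0) *
        (if setDegree H J₂ = s then 1 else 0)) ≤ (if J₁ = J₂ then b else 0) + c := by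
    intro J₁ h₁ J₂ h₂
    split_ifs with h
    · subst h
      simp only [ite_mul_ite, mul_one, mul_zero]
      rw [subsetExp_setDegree_eq ((hcard h₁).trans_le hjk.le), hcard h₁]
      exact le_add_of_nonneg_right hc
    · rw [zero_add]
      exact subsetExp_setDegree_eq_and_le hp0 hp1 hjk hs (hcard h₁) (hcard h₂) h
  calc binomExp n k p (fun H => (numDegSets n j s H : ℝ) ^ 2)
      = ∑ J₁ ∈ P, ∑ J₂ ∈ P,
          subsetExp (kSets n k) p (fun H => (if setDegree H J₁ = s then 1 else 0) *
            (if setDegree H J₂ = s then 1 else 0)) := by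
        simp only [binomExp_eq_subsetExp, numDegSets_eq_sum, sq, Finset.sum_mul_sum,
          subsetExp_sum, hP]
    _ ≤ ∑ J₁ ∈ P, ∑ J₂ ∈ P, ((if J₁ = J₂ then b else 0) + c) :=
        Finset.sum_le_sum fun J₁ h₁ => Finset.sum_le_sum fun J₂ h₂ => hpair J₁ h₁ J₂ h₂
    _ = P.card * b + (P.card * b) ^ 2 / (1 - p) ^ (n - (j + 1)).choose (k - (j + 1)) := by
        simp +contextual only [Finset.sum_add_distrib, Finset.sum_ite_eq, Finset.sum_const,
          nsmul_eq_mul, if_true]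
        ring
    _ = _ := by simp [binomExp_numDegSets hjk.le, P, b]

theorem le_binomProb_lt_numDegSets (hp0 : 0 ≤ p) (hp1 : p < 1) (hjk : j < k)
    (hs : (s : ℝ) ≤ ((n - j).choose (k - j) - s) * p) {μ : ℝ}
    (hμ : binomExp n k p (fun H => (numDegSets n j s H : ℝ)) = μ) (hμ0 : 0 < μ) {K : ℕ}
    (hK : K ≤ μ) :
    (μ - K) ^ 2 / (μ + μ ^ 2 / (1 - p) ^ (n - (j + 1)).choose (k - (j + 1))) ≤
      binomProb n k p (fun H => K < numDegSets n j s H) := by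
  have hden : 0 < μ + μ ^ 2 / (1 - p) ^ (n - (j + 1)).choose (k - (j + 1)) :=
    add_pos_of_pos_of_nonneg hμ0
      (div_nonneg (sq_nonneg μ) (pow_nonneg (sub_nonneg.2 hp1.le) _))
  have hpz := subsetExp_paley_zygmund (E := kSets n k) hp0 hp1.le
    (fun H => (numDegSets n j s H : ℝ)) K.cast_nonneg (hK.trans_eq hμ.symm)
  have hsq := hμ ▸ binomExp_numDegSets_sq_le hp0 hp1 hjk hs
  simp only [Nat.cast_lt, ← binomExp_eq_subsetExp, hμ] at hpz
  rw [div_le_iff₀ hden, mul_comm]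
  calc (μ - K) ^ 2
      ≤ binomExp n k p (fun H => (numDegSets n j s H : ℝ) ^ 2) *
          binomProb n k p (fun H => K < numDegSets n j s H) := by
        rw [binomProb_eq_binomExp]
        convert hpz
    _ ≤ _ := mul_le_mul_of_nonneg_right hsq (binomProb_nonneg hp0 hp1.le _)

end DegreeSets

section Asymptotics

lemma tendsto_sq_sub_div_add_sq_div {ι : Type*} {l : Filter ι} {L δ : ι → ℝ}
    (hL : Tendsto L l atTop) (hδ : Tendsto δ l (nhds 1)) (K : ℝ) :
    Tendsto (fun i => (L i - K) ^ 2 / (L i + L i ^ 2 / δ i)) l (nhds 1) := by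
  have hinv : Tendsto (fun i => (L i)⁻¹) l (nhds 0) := hL.inv_tendsto_atTop
  have hlim : Tendsto (fun i => (1 - K * (L i)⁻¹) ^ 2 / ((L i)⁻¹ + (δ i)⁻¹)) l (nhds 1) := by
    simpa [Pi.div_def] using
      (((tendsto_const_nhds (x := (1 : ℝ))).sub (hinv.const_mul K)).pow 2).div
        (hinv.add (hδ.inv₀ one_ne_zero)) (by norm_num)
  refine hlim.congr' ?_
  filter_upwards [hL.eventually_gt_atTop 0] with i hi
  rw [← mul_div_mul_left _ _ (pow_ne_zero 2 hi.ne')]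
  congr 1 <;> field_simp

lemma tendsto_one_sub_pow {ι : Type*} {l : Filter ι} {p : ι → ℝ} {M : ι → ℕ}
    (hp0 : ∀ᶠ i in l, 0 ≤ p i) (hp1 : ∀ᶠ i in l, p i ≤ 1)
    (hM : Tendsto (fun i => M i * p i) l (nhds 0)) :
    Tendsto (fun i => (1 - p i) ^ M i) l (nhds 1) := by
  refine tendsto_of_tendsto_of_tendsto_of_le_of_le' (g := fun i => 1 - M i * p i)
    (by simpa using hM.const_sub 1) tendsto_const_nhds ?_ ?_
  · filter_upwards [hp1] with i hi
    have hbernoulli := one_add_mul_le_pow (show -2 ≤ -p i by linarith) (M i)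
    rwa [mul_neg, ← sub_eq_add_neg, ← sub_eq_add_neg] at hbernoulli
  · filter_upwards [hp0, hp1] with i hi₀ hi₁
    exact pow_le_one₀ (sub_nonneg.2 hi₁) (sub_le_self 1 hi₀)

lemma exp_neg_mul_div_le_one_sub_pow {p : ℝ} (hp : p < 1) (m : ℕ) :
    Real.exp (-(m * (p / (1 - p)))) ≤ (1 - p) ^ m := by
  have hq : 0 < 1 - p := sub_pos.2 hp
  rw [← Real.exp_log (pow_pos hq m), Real.exp_le_exp, Real.log_pow, ← mul_neg]
  refine mul_le_mul_of_nonneg_left ?_ m.cast_nonneg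
  calc -(p / (1 - p)) = 1 - (1 - p)⁻¹ := by field_simp; ring
    _ ≤ Real.log (1 - p) := Real.one_sub_inv_le_log_of_pos hq

lemma isEquivalent_natCast_sub (j : ℕ) :
    (fun n : ℕ => ((n - j : ℕ) : ℝ)) ~[atTop] fun n : ℕ => (n : ℝ) := by
  refine IsLittleO.isEquivalent (IsBigO.trans_isLittleO (g := fun _ => (1 : ℝ)) ?_ ?_)
  · refine .of_bound j (.of_forall fun n => ?_)
    have hle : (n : ℝ) ≤ (n - j : ℕ) + j := mod_cast le_tsub_add
    rw [Pi.sub_apply, Real.norm_eq_abs, abs_sub_comm, abs_of_nonneg, norm_one]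
    · linarith
    · exact sub_nonneg.2 (mod_cast Nat.sub_le n j)
  · exact (isLittleO_one_left_iff ℝ).2 (tendsto_norm_atTop_atTop.comp tendsto_natCast_atTop_atTop)

lemma isEquivalent_choose_sub (j r : ℕ) :
    (fun n : ℕ => ((n - j).choose r : ℝ)) ~[atTop] fun n : ℕ => (n.choose r : ℝ) :=
  ((isEquivalent_choose r).comp_tendsto (tendsto_sub_atTop_nat j)).trans <|
    (((isEquivalent_natCast_sub j).pow r).div .refl).trans (isEquivalent_choose r).symm

lemma isBigO_natCast_choose {r : ℕ} (hr : 1 ≤ r) :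
    (fun n : ℕ => (n : ℝ)) =O[atTop] fun n : ℕ => (n.choose r : ℝ) := by
  refine IsBigO.trans (.of_bound 1 ?_) (isTheta_choose r).2
  filter_upwards [eventually_ge_atTop 1] with n hn
  have hpow : n ≤ n ^ r := Nat.le_self_pow (by omega) n
  rw [one_mul, Real.norm_natCast, Real.norm_of_nonneg (by positivity)]
  exact_mod_cast hpow

lemma tendsto_choose_atTop {r : ℕ} (hr : 1 ≤ r) : Tendsto (fun n : ℕ => n.choose r) atTop atTop :=
  tendsto_natCast_atTop_iff.1 <| (isEquivalent_choose r).symm.tendsto_atTop <|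
    ((tendsto_pow_atTop (by omega)).comp tendsto_natCast_atTop_atTop).atTop_div_const
      (by positivity)

lemma mul_choose_sub_le {j k : ℕ} (hjk : j < k) (n : ℕ) :
    n * (n - (j + 1)).choose (k - (j + 1)) ≤ (k - j) * n.choose (k - j) := by
  obtain ⟨r, rfl⟩ := Nat.exists_eq_add_of_lt hjk
  rw [show j + r + 1 - (j + 1) = r by omega, show j + r + 1 - j = r + 1 by omega]
  cases n with
  | zero => simp
  | succ n =>
    rw [mul_comm (r + 1), ← Nat.add_one_mul_choose_eq]
    exact Nat.mul_le_mul_left _ (Nat.choose_le_choose r (by omega))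

lemma isEquivalent_choose_mul_pow {ι : Type*} {l : Filter ι} {N : ι → ℕ} {p lam : ι → ℝ}
    (hN : Tendsto N l atTop) (h : (fun i => N i * p i) ~[l] lam) (s : ℕ) :
    (fun i => (N i).choose s * p i ^ s) ~[l] fun i => lam i ^ s / s.factorial := by
  refine (((isEquivalent_choose s).comp_tendsto hN).mul (.refl (u := fun i => p i ^ s))).trans ?_
  refine (((h.pow s).div (.refl (u := fun _ => (s.factorial : ℝ)))).congr_left ?_)
  exact .of_forall fun i => by simp [mul_pow]; ring

end Asymptotics

section SparseRange

variable {k j s : ℕ} {p : ℕ → ℝ}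

theorem tendsto_binomProb_lt_numDegSets (hjk : j < k) (hp0 : ∀ᶠ n in atTop, 0 ≤ p n)
    (hp1 : ∀ᶠ n in atTop, p n < 1)
    (hM : Tendsto (fun n => (n - (j + 1)).choose (k - (j + 1)) * p n) atTop (nhds 0))
    (hs : ∀ᶠ n in atTop, (s : ℝ) ≤ ((n - j).choose (k - j) - s) * p n)
    (hmean : Tendsto (fun n => binomExp n k (p n) fun H => (numDegSets n j s H : ℝ)) atTop atTop)
    (K : ℕ) :
    Tendsto (fun n => binomProb n k (p n) fun H => K < numDegSets n j s H) atTop (nhds 1) := by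
  refine tendsto_of_tendsto_of_tendsto_of_le_of_le'
    (tendsto_sq_sub_div_add_sq_div hmean
      (tendsto_one_sub_pow hp0 (hp1.mono fun _ => le_of_lt) hM) K)
    tendsto_const_nhds ?_ ?_
  · filter_upwards [hp0, hp1, hs, hmean.eventually_gt_atTop 0, hmean.eventually_ge_atTop (K : ℝ)]
      with n h₀ h₁ hsn hpos hK
    exact le_binomProb_lt_numDegSets h₀ h₁ hjk hsn rfl hpos hK
  · filter_upwards [hp0, hp1] with n h₀ h₁
    exact binomProb_le_one h₀ h₁.le _

variable {lam : ℕ → ℝ}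

lemma tendsto_edgeProb_zero (hjk : j < k) (hp : ∀ n, p n = lam n / n.choose (k - j))
    (hlam : lam =o[atTop] fun n : ℕ => (n : ℝ)) : Tendsto p atTop (nhds 0) := by
  rw [funext hp]
  exact (hlam.trans_isBigO (isBigO_natCast_choose (by omega))).tendsto_div_nhds_zero

lemma tendsto_avgDegree_mul_edgeProb_zero (hjk : j < k)
    (hp : ∀ n, p n = lam n / n.choose (k - j))
    (hsq : (fun n => lam n ^ 2) =o[atTop] fun n : ℕ => (n : ℝ)) :
    Tendsto (fun n => lam n * p n) atTop (nhds 0) := by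
  refine (hsq.trans_isBigO
    (isBigO_natCast_choose (r := k - j) (by omega))).tendsto_div_nhds_zero.congr fun n => ?_
  rw [hp, sq, mul_div_assoc]

lemma tendsto_choose_sub_mul_edgeProb_zero (hjk : j < k)
    (hp : ∀ n, p n = lam n / n.choose (k - j)) (hlam0 : ∀ᶠ n in atTop, 0 ≤ lam n)
    (hlam : lam =o[atTop] fun n : ℕ => (n : ℝ)) :
    Tendsto (fun n => (n - (j + 1)).choose (k - (j + 1)) * p n) atTop (nhds 0) := by
  have hbound : Tendsto (fun n : ℕ => ((k - j : ℕ) : ℝ) * (lam n / n)) atTop (nhds 0) := by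
    simpa using hlam.tendsto_div_nhds_zero.const_mul ((k - j : ℕ) : ℝ)
  refine squeeze_zero' ?_ ?_ hbound
  · filter_upwards [hlam0] with n h₀
    rw [hp]
    positivity
  · filter_upwards [hlam0, eventually_ge_atTop k, eventually_gt_atTop 0] with n h₀ hkn hn
    have hG : (0 : ℝ) < n.choose (k - j) := mod_cast Nat.choose_pos (by omega)
    have hM : (n : ℝ) * (n - (j + 1)).choose (k - (j + 1)) ≤ (k - j : ℕ) * n.choose (k - j) :=
      mod_cast mul_choose_sub_le hjk n
    rw [hp, ← mul_div_assoc, ← mul_div_assoc, div_le_div_iff₀ hG (by positivity)]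
    calc (n - (j + 1)).choose (k - (j + 1)) * lam n * n
        = n * (n - (j + 1)).choose (k - (j + 1)) * lam n := by ring
      _ ≤ (k - j : ℕ) * n.choose (k - j) * lam n := by gcongr
      _ = (k - j : ℕ) * lam n * n.choose (k - j) := by ring

lemma choose_mul_edgeProb_eventuallyEq (hp : ∀ n, p n = lam n / n.choose (k - j)) :
    (fun n => n.choose (k - j) * p n) =ᶠ[atTop] lam := by
  filter_upwards [eventually_ge_atTop (k - j)] with n hn
  rw [hp, mul_div_cancel₀ _ (mod_cast (Nat.choose_pos hn).ne')]

lemma isEquivalent_choose_sub_mul_edgeProb (hp : ∀ n, p n = lam n / n.choose (k - j)) :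
    (fun n => (n - j).choose (k - j) * p n) ~[atTop] lam :=
  ((isEquivalent_choose_sub j (k - j)).mul .refl).congr_right (choose_mul_edgeProb_eventuallyEq hp)

lemma eventually_exp_neg_sub_one_le_one_sub_pow (hp : ∀ n, p n = lam n / n.choose (k - j))
    (hp0 : Tendsto p atTop (nhds 0)) (hlamp : Tendsto (fun n => lam n * p n) atTop (nhds 0)) :
    ∀ᶠ n in atTop, Real.exp (-lam n - 1) ≤ (1 - p n) ^ n.choose (k - j) := by
  have hsum : Tendsto (fun n => lam n * p n + p n) atTop (nhds 0) := by
    simpa using hlamp.add hp0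
  filter_upwards [choose_mul_edgeProb_eventuallyEq hp, hp0.eventually_lt_const one_pos,
    hsum.eventually_lt_const one_pos] with n hlam h₁ hn
  refine le_trans (Real.exp_le_exp.2 ?_) (exp_neg_mul_div_le_one_sub_pow h₁ _)
  rw [← mul_div_assoc, hlam, ← neg_add', neg_le_neg_iff, div_le_iff₀ (sub_pos.2 h₁)]
  linarith

lemma tendsto_binomExp_numDegSets_atTop (hjk : j < k)
    (hp : ∀ n, p n = lam n / n.choose (k - j)) (hlam0 : ∀ᶠ n in atTop, 0 ≤ lam n)
    (hp0 : Tendsto p atTop (nhds 0)) (hlamp : Tendsto (fun n => lam n * p n) atTop (nhds 0))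
    (hmean : Tendsto (fun n : ℕ => n ^ j * lam n ^ s * Real.exp (-lam n)) atTop atTop) :
    Tendsto (fun n => binomExp n k (p n) fun H => (numDegSets n j s H : ℝ)) atTop atTop := by
  have hN : Tendsto (fun n : ℕ => (n - j).choose (k - j)) atTop atTop :=
    (tendsto_choose_atTop (by omega)).comp (tendsto_sub_atTop_nat j)
  have hequiv : (fun n : ℕ => n.choose j * (((n - j).choose (k - j)).choose s * p n ^ s) *
      Real.exp (-lam n - 1)) ~[atTop] fun n : ℕ => Real.exp (-1) / (j.factorial * s.factorial) *
        (n ^ j * lam n ^ s * Real.exp (-lam n)) := by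
    refine (((isEquivalent_choose j).mul (isEquivalent_choose_mul_pow hN
      (isEquivalent_choose_sub_mul_edgeProb hp) s)).mul .refl).congr_right ?_
    refine .of_forall fun n => ?_
    simp only [Pi.mul_apply, sub_eq_add_neg, Real.exp_add]
    field_simp
  have hlower := hequiv.symm.tendsto_atTop (hmean.const_mul_atTop (by positivity))
  refine tendsto_atTop_mono' _ ?_ hlower
  filter_upwards [eventually_exp_neg_sub_one_le_one_sub_pow hp hp0 hlamp, hlam0,
    hp0.eventually_lt_const one_pos] with n hexp h₀ h₁
  have hpn : 0 ≤ p n := hp n ▸ div_nonneg h₀ (Nat.cast_nonneg _)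
  have hNG : (n - j).choose (k - j) - s ≤ n.choose (k - j) :=
    (Nat.sub_le _ _).trans (Nat.choose_le_choose _ (Nat.sub_le n j))
  have hpow : Real.exp (-lam n - 1) ≤ (1 - p n) ^ ((n - j).choose (k - j) - s) :=
    hexp.trans (pow_le_pow_of_le_one (sub_nonneg.2 h₁.le) (sub_le_self 1 hpn) hNG)
  rw [binomExp_numDegSets hjk.le, binomMass, mul_assoc (n.choose j : ℝ)]
  gcongr

theorem tendsto_binomProb_lt_numDegSets_of_avgDegree (hjk : j < k)
    (hp : ∀ n, p n = lam n / n.choose (k - j)) (hlam : Tendsto lam atTop atTop)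
    (hsq : (fun n => lam n ^ 2) =o[atTop] fun n : ℕ => (n : ℝ))
    (hmean : Tendsto (fun n : ℕ => n ^ j * lam n ^ s * Real.exp (-lam n)) atTop atTop) (K : ℕ) :
    Tendsto (fun n => binomProb n k (p n) fun H => K < numDegSets n j s H) atTop (nhds 1) := by
  have hlam0 := hlam.eventually_ge_atTop 0
  have hlin : lam =o[atTop] fun n : ℕ => (n : ℝ) := by
    refine (IsBigO.of_bound 1 ?_).trans_isLittleO hsq
    filter_upwards [hlam.eventually_ge_atTop 1] with n h₁
    rw [one_mul, norm_pow]
    exact le_self_pow₀ (h₁.trans (le_abs_self _)) two_ne_zero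
  have hp0 := tendsto_edgeProb_zero hjk hp hlin
  have hlamp := tendsto_avgDegree_mul_edgeProb_zero hjk hp hsq
  refine tendsto_binomProb_lt_numDegSets hjk ?_ (hp0.eventually_lt_const one_pos)
    (tendsto_choose_sub_mul_edgeProb_zero hjk hp hlam0 hlin) ?_
    (tendsto_binomExp_numDegSets_atTop hjk hp hlam0 hp0 hlamp hmean) K
  · filter_upwards [hlam0] with n h₀
    exact hp n ▸ div_nonneg h₀ (Nat.cast_nonneg _)
  · have hNp := (isEquivalent_choose_sub_mul_edgeProb (j := j) hp).symm.tendsto_atTop hlam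
    filter_upwards [(hNp.atTop_add (hp0.const_mul (-(s : ℝ)))).eventually_ge_atTop (s : ℝ)]
      with n hn
    linarith

end SparseRange

section Threshold

variable {j s : ℕ} {c : ℕ → ℝ}

lemma tendsto_log_natCast_atTop : Tendsto (fun n : ℕ => Real.log n) atTop atTop :=
  Real.tendsto_log_atTop.comp tendsto_natCast_atTop_atTop

/- If `L / 2 ≤ lam` then `lam ^ s` absorbs the factor `L ^ s`, which leaves `exp (-c)`; otherwise
`exp (-lam)` alone is at least `exp (-L / 2)`. -/
lemma min_exp_le_exp_mul_pow_mul_exp_neg {a L lam c : ℝ} (ha : 1 ≤ a) (hL : 0 < L)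
    (hlam1 : 1 ≤ lam) (hlam : lam = a * L + s * Real.log L + c) :
    min ((1 / 2) ^ s * Real.exp (-c)) (Real.exp (L / 2)) ≤
      Real.exp (a * L) * lam ^ s * Real.exp (-lam) := by
  rcases le_total (L / 2) lam with hbig | hsmall
  · have hexp : Real.exp (-c) = Real.exp (a * L) * L ^ s * Real.exp (-lam) := by
      rw [← Real.exp_log hL, ← Real.exp_nat_mul, Real.exp_log hL, ← Real.exp_add, ← Real.exp_add,
        hlam]
      ring_nf
    calc min ((1 / 2) ^ s * Real.exp (-c)) (Real.exp (L / 2))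
        ≤ (1 / 2) ^ s * Real.exp (-c) := min_le_left _ _
      _ = Real.exp (a * L) * (L / 2) ^ s * Real.exp (-lam) := by rw [hexp]; ring
      _ ≤ Real.exp (a * L) * lam ^ s * Real.exp (-lam) := by gcongr
  · have haL : L ≤ a * L := le_mul_of_one_le_left hL.le ha
    calc min ((1 / 2) ^ s * Real.exp (-c)) (Real.exp (L / 2))
        ≤ Real.exp (L / 2) := min_le_right _ _
      _ ≤ Real.exp (a * L + -lam) := Real.exp_le_exp.2 (by linarith)
      _ = Real.exp (a * L) * 1 * Real.exp (-lam) := by rw [Real.exp_add, mul_one]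
      _ ≤ Real.exp (a * L) * lam ^ s * Real.exp (-lam) := by gcongr; exact one_le_pow₀ hlam1

lemma tendsto_pow_mul_pow_mul_exp_neg_atTop (hj : 1 ≤ j) {lam : ℕ → ℝ}
    (hlam : ∀ n : ℕ, lam n = j * Real.log n + s * Real.log (Real.log n) + c n)
    (hlamtop : Tendsto lam atTop atTop) (hc : Tendsto c atTop atBot) :
    Tendsto (fun n : ℕ => n ^ j * lam n ^ s * Real.exp (-lam n)) atTop atTop := by
  have hexpc : Tendsto (fun n => (1 / 2) ^ s * Real.exp (-c n)) atTop atTop :=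
    (Real.tendsto_exp_atTop.comp (tendsto_neg_atBot_atTop.comp hc)).const_mul_atTop (by positivity)
  have hexplog : Tendsto (fun n : ℕ => Real.exp (Real.log n / 2)) atTop atTop :=
    Real.tendsto_exp_atTop.comp (tendsto_log_natCast_atTop.atTop_div_const two_pos)
  refine tendsto_atTop_mono' _ ?_ (tendsto_inf_atTop _ hexpc hexplog)
  filter_upwards [eventually_gt_atTop 0, tendsto_log_natCast_atTop.eventually_gt_atTop 0,
    hlamtop.eventually_ge_atTop 1] with n hn hlog h₁
  have hpow : (n : ℝ) ^ j = Real.exp (j * Real.log n) := by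
    rw [Real.exp_nat_mul, Real.exp_log (mod_cast hn)]
  rw [hpow]
  exact min_exp_le_exp_mul_pow_mul_exp_neg (mod_cast hj) hlog h₁ (hlam n)

lemma sq_isLittleO_natCast {lam : ℕ → ℝ}
    (hlam : ∀ n : ℕ, lam n = j * Real.log n + s * Real.log (Real.log n) + c n)
    (hlamtop : Tendsto lam atTop atTop) (hc : Tendsto c atTop atBot) :
    (fun n => lam n ^ 2) =o[atTop] fun n : ℕ => (n : ℝ) := by
  have hbigO : lam =O[atTop] fun n : ℕ => Real.log n := by
    refine .of_bound (j + s) ?_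
    filter_upwards [tendsto_log_natCast_atTop.eventually_gt_atTop 0,
      hlamtop.eventually_ge_atTop 0, hc.eventually_le_atBot 0] with n hlog h₀ hcn
    have hloglog : s * Real.log (Real.log n) ≤ s * Real.log n :=
      mul_le_mul_of_nonneg_left (Real.log_le_self hlog.le) s.cast_nonneg
    rw [Real.norm_of_nonneg h₀, Real.norm_of_nonneg hlog.le, hlam]
    linarith
  exact (hbigO.pow 2).trans_isLittleO
    (Real.isLittleO_pow_log_id_atTop.comp_tendsto tendsto_natCast_atTop_atTop)

lemma tendsto_log_add_log_log_add_atTop (hj : 1 ≤ j) (hc : c =o[atTop] fun n : ℕ => Real.log n) :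
    Tendsto (fun n : ℕ => j * Real.log n + s * Real.log (Real.log n) + c n) atTop atTop := by
  have hj0 : (0 : ℝ) < j := mod_cast hj
  have hequiv : (fun n : ℕ => j * Real.log n + c n) ~[atTop] fun n : ℕ => j * Real.log n :=
    IsEquivalent.refl.add_isLittleO (hc.const_mul_right hj0.ne')
  refine tendsto_atTop_mono' _ ?_
    (hequiv.symm.tendsto_atTop (tendsto_log_natCast_atTop.const_mul_atTop hj0))
  filter_upwards [tendsto_log_natCast_atTop.eventually_ge_atTop 1] with n hlog
  have hloglog : 0 ≤ s * Real.log (Real.log n) := mul_nonneg s.cast_nonneg (Real.log_nonneg hlog)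
  linarith

end Threshold

theorem many_degree_s_sets_general (k j s : ℕ) (hj : 1 ≤ j) (hjk : j < k) (p c : ℕ → ℝ)
    (hlam : Tendsto (fun n : ℕ => (j : ℝ) * Real.log n + (s : ℝ) * Real.log (Real.log n) + c n)
      atTop atTop)
    (hcinf : Tendsto c atTop atBot)
    (hp : ∀ n : ℕ, p n =
      ((j : ℝ) * Real.log n + (s : ℝ) * Real.log (Real.log n) + c n) / (n.choose (k - j) : ℝ)) :
    ∀ K : ℕ,
      Tendsto (fun n : ℕ => binomProb n k (p n) (fun H => K < numDegSets n j s H)) atTop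
        (nhds 1) :=
  tendsto_binomProb_lt_numDegSets_of_avgDegree hjk hp hlam
    (sq_isLittleO_natCast (fun _ => rfl) hlam hcinf)
    (tendsto_pow_mul_pow_mul_exp_neg_atTop hj (fun _ => rfl) hlam hcinf)

/-- **Theorem 2(iii).** For `k ≥ 3`, `1 ≤ j ≤ k-1`, a fixed integer `s ≥ 0`, and
`p = (j log n + s log log n + c_n)/C(n,k-j)` with `c_n = o(log n)` and `c_n → -∞`,
`D_s → ∞` with high probability: for every constant `K`, `Pr(D_s > K) → 1`. -/
theorem many_degree_s_sets (k j s : ℕ) (hk : 3 ≤ k) (hj : 1 ≤ j) (hjk : j ≤ k - 1)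
    (p c : ℕ → ℝ)
    (hc : c =o[atTop] fun n : ℕ => Real.log n)
    (hcinf : Tendsto c atTop atBot)
    (hp : ∀ n : ℕ, p n =
      ((j : ℝ) * Real.log n + (s : ℝ) * Real.log (Real.log n) + c n) /
        (n.choose (k - j) : ℝ)) :
    ∀ K : ℕ,
      Tendsto (fun n : ℕ => binomProb n k (p n) (fun H => K < numDegSets n j s H)) atTop
        (nhds 1) :=
  many_degree_s_sets_general k j s hj (by omega) p c (tendsto_log_add_log_log_add_atTop hj hc)
    hcinf hp

end
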